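/- Let F be a finite field of characteristic 2 with q = 2^k ≡ 1 or 4 (mod 15), and G = C_3 × D_10. Then the unit group U(FG) is isomorphic to C_2^{3k} ⋊ (C_{2^k−1}³ × GL(2,F)⁶). -/

import Mathlib

/-!
If `F` contains enough roots of unity for a finite abelian group `A`, the characters of `A`
identify `F[A × H]` with `|A|` copies of `F[H]`: the evaluations at elements of `A` are distinct
characters of the dual group, so Dedekind's independence theorem gives injectivity, and a dimension
count gives the rest.

Suppose that `F` has characteristic `2` and `X ^ n - 1 = (X - 1) * ∏ i, (X ^ 2 - c i * X + 1)`. Each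
`c i` gives a representation of the dihedral group `⟨r, s⟩` of order `2n` by `2 × 2` matrices, with
`r` acting through a matrix of trace `c i` and determinant `1`; moreover, `r ↦ 1`, `s ↦ 1 + ε` maps
the group into the dual numbers. An element of the group algebra is `p(r) + s q(r)` with `p`, `q` of
degree less than `n`, and if it is killed by all these representations then every factor of
`X ^ n - 1` divides both `p` and `q`. As `X ^ n - 1` is separable, `p = q = 0`, and a dimension
count gives `F[D_{2n}] ≅ F[ε] × M₂(F)^((n - 1) / 2)`. Since `F[ε]ˣ ≅ F × Fˣ`, the unit group of
`F[A × D_{2n}]` is even a direct product. For `n = 5` the `c i` are the two primitive cube roots of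
unity.
-/

open Polynomial DualNumber

section FiniteGroups

/-- Regroups a power of the product of `M`, `N` and a power of `P` into a product of powers, keeping
the order of the factors. -/
def regroupPiProd (κ ι M N P : Type*) [Mul M] [Mul N] [Mul P] :
    (κ → (M × N) × (ι → P)) ≃* (κ → M) × (κ → N) × (κ × ι → P) where
  toFun x := (fun j => (x j).1.1, fun j => (x j).1.2, fun ji => (x ji.1).2 ji.2)
  invFun y j := ((y.1 j, y.2.1 j), fun i => y.2.2 (j, i))
  map_mul' _ _ := rfl

theorem nonempty_mulEquiv_pi_zmod_of_card_eq_pow {p d : ℕ} [Fact p.Prime] {V : Type*}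
    [AddCommGroup V] [Module (ZMod p) V] (hV : Nat.card V = p ^ d) :
    Nonempty (Multiplicative V ≃* (Fin d → Multiplicative (ZMod p))) := by
  have hp : 1 < p := (Fact.out : p.Prime).one_lt
  have : Finite V := Nat.finite_of_card_ne_zero (by rw [hV]; positivity)
  have hdim : Module.finrank (ZMod p) V = d := by
    refine Nat.pow_right_injective hp ?_
    simpa only [Nat.card_zmod, hV] using
      (Module.natCard_eq_pow_finrank (K := ZMod p) (V := V)).symm
  let e : V ≃ₗ[ZMod p] (Fin d → ZMod p) := LinearEquiv.ofFinrankEq _ _ (by simp [hdim])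
  exact ⟨e.toAddEquiv.toMultiplicative.trans (MulEquiv.funMultiplicative _ _)⟩

theorem hasEnoughRootsOfUnity_of_dvd_card_sub_one {F : Type*} [Field F] [Finite F] {m : ℕ}
    (hm : m ∣ Nat.card F - 1) : HasEnoughRootsOfUnity F m := by
  have card_pos : 0 < Nat.card F - 1 := Nat.sub_pos_of_lt Finite.one_lt_card
  have : NeZero m := ⟨ne_zero_of_dvd_ne_zero card_pos.ne' hm⟩
  obtain ⟨g, hg⟩ := IsCyclic.exists_ofOrder_eq_natCard (α := Fˣ)
  have hg' : IsPrimitiveRoot (g : F) (Nat.card F - 1) := by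
    rw [← Nat.card_units, ← hg]
    exact IsPrimitiveRoot.coe_units_iff.2 (IsPrimitiveRoot.orderOf g)
  obtain ⟨d, hd⟩ := hm
  exact ⟨⟨_, hg'.pow card_pos (hd.trans (mul_comm m d))⟩, rootsOfUnity.isCyclic F m⟩

end FiniteGroups

section TrivSqZeroExt

variable {R M : Type*} [CommRing R] [AddCommGroup M] [Module R M] [Module Rᵐᵒᵖ M]
  [IsCentralScalar R M]

/-- The unit `r (1 + m)` of the trivial square-zero extension of `R` by `M`. -/
def trivSqZeroExtUnit (m : M) (r : Rˣ) : (TrivSqZeroExt R M)ˣ where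
  val := .inl (r : R) + .inr ((r : R) • m)
  inv := .inl (↑r⁻¹ : R) - .inr ((↑r⁻¹ : R) • m)
  val_inv := by ext <;> simp [smul_smul]
  inv_val := by ext <;> simp [smul_smul]

variable (R M) in
/-- The decomposition of the units of a commutative trivial square-zero extension into the
principal units `1 + m` and the units of `R`. -/
def unitsTrivSqZeroExtEquiv : (TrivSqZeroExt R M)ˣ ≃* Multiplicative M × Rˣ :=
  MulEquiv.symm
  { toFun := fun p => trivSqZeroExtUnit p.1.toAdd p.2
    invFun := fun u => (.ofAdd ((↑u⁻¹ : TrivSqZeroExt R M).fst • (u : TrivSqZeroExt R M).snd),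
      Units.map (TrivSqZeroExt.fstHom R R M : TrivSqZeroExt R M →* R) u)
    left_inv := fun p => by ext <;> simp [trivSqZeroExtUnit, smul_smul]
    right_inv := fun u => by
      have h : (u : TrivSqZeroExt R M).fst * (↑u⁻¹ : TrivSqZeroExt R M).fst = 1 := by
        rw [← TrivSqZeroExt.fst_mul, Units.mul_inv, TrivSqZeroExt.fst_one]
      ext <;> simp [trivSqZeroExtUnit, smul_smul, h]
    map_mul' := fun p q => by
      ext
      · simp [trivSqZeroExtUnit]
      · simp only [trivSqZeroExtUnit, Prod.fst_mul, Prod.snd_mul, toAdd_mul, Units.val_mul,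
          TrivSqZeroExt.snd_add, TrivSqZeroExt.snd_mul, TrivSqZeroExt.fst_add,
          TrivSqZeroExt.fst_inl, TrivSqZeroExt.fst_inr, TrivSqZeroExt.snd_inl,
          TrivSqZeroExt.snd_inr, op_smul_eq_smul]
        module }

end TrivSqZeroExt

section Characters

open MonoidAlgebra

theorem finrank_monoidAlgebra (R G : Type*) [Ring R] [StrongRankCondition R] [Finite G] :
    Module.finrank R (MonoidAlgebra R G) = Nat.card G := by
  have := Fintype.ofFinite G
  rw [(coeffLinearEquiv R).finrank_eq, Module.finrank_finsupp_self, Nat.card_eq_fintype_card]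

/-- The homomorphism `(a, h) ↦ χ(a) h` whose linear extension projects `R[A × H]` to its
`χ`-component. -/
noncomputable def characterTwist {R A H : Type*} [CommSemiring R] [Monoid A] [Monoid H]
    (χ : A →* Rˣ) : A × H →* MonoidAlgebra R H where
  toFun g := single g.2 (χ g.1 : R)
  map_one' := by simp [one_def]
  map_mul' g h := by simp [single_mul_single]

theorem coeff_lift_characterTwist {R A H : Type*} [CommSemiring R] [Monoid A] [Monoid H]
    [Fintype A] [Finite H] (χ : A →* Rˣ) (x : MonoidAlgebra R (A × H)) (h : H) :
    (lift R _ _ (characterTwist χ) x).coeff h = ∑ a, x.coeff (a, h) * χ a := by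
  classical
  have := Fintype.ofFinite H
  rw [lift_apply, Finsupp.sum_fintype _ _ (by simp), Fintype.sum_prod_type_right]
  simp [characterTwist, Finsupp.single_apply, MonoidAlgebra.coeff_sum]

variable {F A : Type*} [Field F] [CommGroup A]

theorem eq_zero_of_forall_sum_mul_character_eq_zero [Fintype A]
    [HasEnoughRootsOfUnity F (Monoid.exponent A)] {v : A → F}
    (hv : ∀ χ : A →* Fˣ, ∑ a, v a * χ a = 0) : v = 0 := by
  let ev (a : A) : (A →* Fˣ) →* F := (Units.coeHom F).comp (MonoidHom.eval a)
  have ev_injective : Function.Injective ev := fun a b hab =>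
    (CommGroup.forall_apply_eq_apply_iff (M := F) A).1 fun χ => Units.ext (DFunLike.congr_fun hab χ)
  have ev_independent := (linearIndependent_monoidHom (A →* Fˣ) F).comp ev ev_injective
  refine funext (Fintype.linearIndependent_iff.1 ev_independent v (funext fun χ => ?_))
  simpa [ev] using hv χ

variable (F A) in
theorem nonempty_monoidAlgebra_prod_algEquiv_pi (H : Type*) [Monoid H] [Finite A] [Finite H]
    [HasEnoughRootsOfUnity F (Monoid.exponent A)] :
    Nonempty (MonoidAlgebra F (A × H) ≃ₐ[F] (A → MonoidAlgebra F H)) := by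
  have := Fintype.ofFinite A
  have := Fintype.ofFinite (A →* Fˣ)
  obtain ⟨dual⟩ := CommGroup.monoidHom_mulEquiv_of_hasEnoughRootsOfUnity A F
  let Φ : MonoidAlgebra F (A × H) →ₐ[F] ((A →* Fˣ) → MonoidAlgebra F H) :=
    AlgHom.pi fun χ => lift F _ _ (characterTwist χ)
  have injective : Function.Injective Φ := by
    refine (injective_iff_map_eq_zero Φ).2 fun x hx => ?_
    ext ⟨a, h⟩
    have orthogonal (χ : A →* Fˣ) : ∑ a, x.coeff (a, h) * χ a = 0 := by
      rw [← coeff_lift_characterTwist, show lift F _ _ (characterTwist χ) x = 0 from congrFun hx χ]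
      rfl
    exact congrFun (eq_zero_of_forall_sum_mul_character_eq_zero orthogonal) a
  have finrank_eq : Module.finrank F (MonoidAlgebra F (A × H)) =
      Module.finrank F ((A →* Fˣ) → MonoidAlgebra F H) := by
    simp [Module.finrank_pi_fintype, finrank_monoidAlgebra, Nat.card_prod,
      ← Nat.card_eq_fintype_card, Nat.card_congr dual.toEquiv]
  have surjective : Function.Surjective Φ :=
    (LinearMap.injective_iff_surjective_of_finrank_eq_finrank (f := Φ.toLinearMap) finrank_eq).1
      injective
  exact ⟨(AlgEquiv.ofBijective Φ ⟨injective, surjective⟩).trans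
    (AlgEquiv.piCongrLeft F (fun _ => MonoidAlgebra F H) dual.toEquiv)⟩

end Characters

section DihedralLift

variable {n : ℕ} [NeZero n] {M : Type*} [Monoid M]

theorem pow_zmod_val_add {a : M} (ha : a ^ n = 1) (i j : ZMod n) :
    a ^ (i + j).val = a ^ i.val * a ^ j.val := by
  rw [ZMod.val_add, ← pow_add, ← pow_eq_pow_mod _ ha]

theorem pow_mul_mul_pow_eq_self {a b : M} (hab : a * b * a = b) (k : ℕ) :
    a ^ k * b * a ^ k = b := by
  induction k with
  | zero => simp
  | succ k ih =>
    calc a ^ (k + 1) * b * a ^ (k + 1) = a ^ k * (a * b * a) * a ^ k := by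
          nth_rw 2 [pow_succ']; simp only [pow_succ, mul_assoc]
      _ = b := by rw [hab, ih]

theorem pow_val_mul_mul_pow_val {a b : M} (ha : a ^ n = 1) (hab : a * b * a = b) (i j : ZMod n) :
    a ^ i.val * b * a ^ j.val = b * a ^ (j - i).val := by
  rw [← add_sub_cancel i j, pow_zmod_val_add ha, ← mul_assoc, pow_mul_mul_pow_eq_self hab,
    add_sub_cancel]

/-- The homomorphism `r ↦ a`, `s ↦ b` out of the dihedral group of order `2n` given by elements
satisfying its defining relations, the last one in the form `r s r = s`, which needs no inverses. -/
def dihedralLift (a b : M) (ha : a ^ n = 1) (hb : b * b = 1) (hab : a * b * a = b) :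
    DihedralGroup n →* M where
  toFun
    | .r i => a ^ i.val
    | .sr i => b * a ^ i.val
  map_one' := by simp only [DihedralGroup.one_def, ZMod.val_zero, pow_zero]
  map_mul' := by
    rintro (i | i) (j | j)
    · exact pow_zmod_val_add ha i j
    · simpa only [mul_assoc, DihedralGroup.r_mul_sr] using (pow_val_mul_mul_pow_val ha hab i j).symm
    · simp only [DihedralGroup.sr_mul_r, pow_zmod_val_add ha, mul_assoc]
    · calc a ^ (j - i).val = b * (b * a ^ (j - i).val) := by rw [← mul_assoc, hb, one_mul]
        _ = b * a ^ i.val * (b * a ^ j.val) := by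
          rw [← pow_val_mul_mul_pow_val ha hab]; simp only [mul_assoc]

end DihedralLift

section ZModPolynomial

variable {n : ℕ} [NeZero n] {R : Type*}

/-- The polynomial of degree less than `n` with coefficients `v`, indexed by residues modulo `n`. -/
noncomputable def zmodPolynomial [Semiring R] (v : ZMod n → R) : R[X] :=
  ∑ i, monomial i.val (v i)

theorem coeff_zmodPolynomial [Semiring R] (v : ZMod n → R) (i : ZMod n) :
    (zmodPolynomial v).coeff i.val = v i := by
  simp [zmodPolynomial, coeff_monomial, (ZMod.val_injective n).eq_iff]

theorem degree_zmodPolynomial_lt [Semiring R] (v : ZMod n → R) : (zmodPolynomial v).degree < n := by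
  refine (degree_sum_le _ _).trans_lt ((Finset.sup_lt_iff (WithBot.bot_lt_coe n)).2 fun i _ => ?_)
  exact (degree_monomial_le _ _).trans_lt (WithBot.coe_lt_coe.2 i.val_lt)

theorem eq_zero_of_X_pow_sub_one_dvd_zmodPolynomial [CommRing R] [IsDomain R]
    {v : ZMod n → R} (h : X ^ n - 1 ∣ zmodPolynomial v) : v = 0 := by
  have hv : zmodPolynomial v = 0 := by
    refine eq_zero_of_dvd_of_degree_lt h ?_
    rw [← C_1, degree_X_pow_sub_C (NeZero.pos n)]
    exact degree_zmodPolynomial_lt v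
  funext i
  rw [← coeff_zmodPolynomial v i, hv, coeff_zero, Pi.zero_apply]

theorem lift_dihedralLift [CommSemiring R] {B : Type*} [Semiring B] [Algebra R B] {a b : B}
    (ha : a ^ n = 1) (hb : b * b = 1) (hab : a * b * a = b)
    (x : MonoidAlgebra R (DihedralGroup n)) :
    MonoidAlgebra.lift R _ _ (dihedralLift a b ha hb hab) x =
      aeval a (zmodPolynomial fun i => x.coeff (.r i)) +
        b * aeval a (zmodPolynomial fun i => x.coeff (.sr i)) := by
  rw [MonoidAlgebra.lift_apply, Finsupp.sum_fintype _ _ (by simp),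
    ← DihedralGroup.equivSum.symm.sum_comp, Fintype.sum_sum_type]
  simp [DihedralGroup.equivSum, dihedralLift, zmodPolynomial, aeval_monomial, Finset.mul_sum,
    ← Algebra.smul_def]

end ZModPolynomial

section Rotation

open Matrix

variable {R : Type*} [CommRing R]

/-- The companion matrix of `X ^ 2 - c X + 1`, by which a rotation of a dihedral group acts. For
`c = ζ + ζ⁻¹` it has eigenvalues `ζ` and `ζ⁻¹`. -/
def rotationMatrix (c : R) : Matrix (Fin 2) (Fin 2) R := !![0, -1; 1, c]

variable (R) in
/-- The permutation matrix by which a reflection of a dihedral group acts. -/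
def swapMatrix : Matrix (Fin 2) (Fin 2) R := !![0, 1; 1, 0]

theorem charpoly_rotationMatrix [Nontrivial R] (c : R) :
    (rotationMatrix c).charpoly = X ^ 2 - C c * X + 1 := by
  simp [charpoly_fin_two, rotationMatrix, trace_fin_two]

theorem swapMatrix_mul_self : swapMatrix R * swapMatrix R = 1 := by
  simp [swapMatrix, one_fin_two]

theorem rotationMatrix_mul_swapMatrix_mul_rotationMatrix (c : R) :
    rotationMatrix c * swapMatrix R * rotationMatrix c = swapMatrix R := by
  simp [rotationMatrix, swapMatrix]

theorem rotationMatrix_pow_eq_one {c : R} {n : ℕ}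
    (h : (rotationMatrix c).charpoly ∣ X ^ n - 1) : rotationMatrix c ^ n = 1 := by
  obtain ⟨g, hg⟩ := h
  have := congrArg (aeval (rotationMatrix c)) hg
  simpa [aeval_self_charpoly, sub_eq_zero] using this

theorem aeval_rotationMatrix_linear (c u v : R) :
    aeval (rotationMatrix c) (C u * X + C v) = !![v, -u; u, v + c * u] := by
  rw [map_add, map_mul, aeval_C, aeval_C, aeval_X, ← Algebra.smul_def, algebraMap_eq_diagonal]
  ext i j
  fin_cases i <;> fin_cases j <;> simp [rotationMatrix, mul_comm, add_comm]

theorem eq_zero_of_rotationMatrix_add_swapMatrix_mul_eq_zero [NoZeroDivisors R] {c u v s t : R}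
    (hc : c ^ 2 ≠ 4) (h : aeval (rotationMatrix c) (C u * X + C v) +
      swapMatrix R * aeval (rotationMatrix c) (C s * X + C t) = 0) :
    (u = 0 ∧ v = 0) ∧ s = 0 ∧ t = 0 := by
  rw [aeval_rotationMatrix_linear, aeval_rotationMatrix_linear, swapMatrix, mul_fin_two] at h
  have h₀₀ : v + s = 0 := by simpa using congrFun₂ h 0 0
  have h₀₁ : -u + (t + c * s) = 0 := by simpa using congrFun₂ h 0 1
  have h₁₀ : u + t = 0 := by simpa using congrFun₂ h 1 0
  have h₁₁ : v + c * u + -s = 0 := by simpa using congrFun₂ h 1 1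
  have hc' : c ^ 2 - 4 ≠ 0 := sub_ne_zero.2 hc
  have hs : s = 0 := (mul_eq_zero_iff_left hc').1 <| by
    linear_combination c * h₀₁ - 2 * h₀₀ + 2 * h₁₁ - c * h₁₀
  have ht : t = 0 := (mul_eq_zero_iff_left hc').1 <| by
    linear_combination -c * (h₁₁ - h₀₀ - c * h₁₀) - 2 * (h₀₁ + h₁₀)
  subst hs ht
  exact ⟨⟨by simpa using h₁₀, by simpa using h₀₀⟩, rfl, rfl⟩

theorem exists_modByMonic_charpoly_eq_linear [Nontrivial R] (A : Matrix (Fin 2) (Fin 2) R)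
    (f : R[X]) : ∃ u v : R, f %ₘ A.charpoly = C u * X + C v := by
  refine exists_eq_X_add_C_of_natDegree_le_one (Nat.le_of_lt_succ ?_)
  have hdeg : A.charpoly.natDegree = 2 := charpoly_natDegree_eq_dim A
  refine (natDegree_modByMonic_lt f A.charpoly_monic fun hone => ?_).trans_eq hdeg
  simp [hone] at hdeg

theorem charpoly_dvd_of_aeval_add_swapMatrix_mul_aeval_eq_zero [IsDomain R] {c : R}
    (hc : c ^ 2 ≠ 4) {p q : R[X]}
    (h : aeval (rotationMatrix c) p + swapMatrix R * aeval (rotationMatrix c) q = 0) :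
    (rotationMatrix c).charpoly ∣ p ∧ (rotationMatrix c).charpoly ∣ q := by
  obtain ⟨u, v, hp⟩ := exists_modByMonic_charpoly_eq_linear (rotationMatrix c) p
  obtain ⟨s, t, hq⟩ := exists_modByMonic_charpoly_eq_linear (rotationMatrix c) q
  rw [← aeval_modByMonic_eq_self_of_root (aeval_self_charpoly (rotationMatrix c)), hp,
    ← aeval_modByMonic_eq_self_of_root (p := q) (aeval_self_charpoly (rotationMatrix c)), hq] at h
  obtain ⟨⟨rfl, rfl⟩, rfl, rfl⟩ := eq_zero_of_rotationMatrix_add_swapMatrix_mul_eq_zero hc h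
  simp only [← modByMonic_eq_zero_iff_dvd (charpoly_monic _), hp, hq]
  simp

theorem sq_ne_four_of_separable_charpoly_rotationMatrix [IsDomain R] {c : R}
    (h : (rotationMatrix c).charpoly.Separable) : c ^ 2 ≠ 4 := by
  intro hc
  obtain ⟨d, rfl, hd⟩ : ∃ d : R, c = 2 * d ∧ d ^ 2 = 1 := by
    rcases sq_eq_sq_iff_eq_or_eq_neg.1 (show c ^ 2 = 2 ^ 2 by rw [hc]; norm_num) with rfl | rfl
    · exact ⟨1, by simp⟩
    · exact ⟨-1, by simp⟩
  have hC : C d ^ 2 = 1 := by rw [← C_pow, hd, C_1]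
  have charpoly_eq_square : (rotationMatrix (2 * d)).charpoly = (X - C d) * (X - C d) := by
    rw [charpoly_rotationMatrix, C_mul, C_ofNat]
    linear_combination -hC
  exact not_isUnit_X_sub_C d (isUnit_of_self_mul_dvd_separable h charpoly_eq_square.symm.dvd)

end Rotation

section SeparableProducts

variable {R ι : Type*} [CommRing R] [Fintype ι] {f : ι → R[X]}

theorem pairwise_isCoprime_of_separable_prod (h : (∏ i, f i).Separable) :
    Pairwise (Function.onFun IsCoprime f) := by
  classical
  intro i j hij
  refine (h.of_dvd ?_).isCoprime
  rw [← Finset.prod_pair hij]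
  exact Finset.prod_dvd_prod_of_subset _ _ _ (Finset.subset_univ _)

theorem mul_prod_dvd_of_separable {g z : R[X]} (hsep : (g * ∏ i, f i).Separable) (hg : g ∣ z)
    (hf : ∀ i, f i ∣ z) : g * ∏ i, f i ∣ z :=
  hsep.isCoprime.mul_dvd hg
    (Fintype.prod_dvd_of_coprime (pairwise_isCoprime_of_separable_prod hsep.of_mul_right) hf)

end SeparableProducts

section DualNumbers

variable {R : Type*} [CommRing R]

theorem one_add_eps_mul_self [CharP R 2] : (1 + ε : R[ε]) * (1 + ε) = 1 := by
  have : (2 : R) = 0 := CharTwo.two_eq_zero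
  ext <;> simp [one_add_one_eq_two, this]

theorem X_sub_one_dvd_of_aeval_add_one_add_eps_mul_aeval_eq_zero {p q : R[X]}
    (h : aeval (1 : R[ε]) p + (1 + ε) * aeval (1 : R[ε]) q = 0) : X - 1 ∣ p ∧ X - 1 ∣ q := by
  have aeval_one (f : R[X]) : aeval (1 : R[ε]) f = algebraMap R R[ε] (f.eval 1) := by
    rw [← map_one (algebraMap R R[ε]), aeval_algebraMap_apply_eq_algebraMap_eval]
  rw [aeval_one, aeval_one, TrivSqZeroExt.algebraMap_eq_inl] at h
  have hq : q.eval 1 = 0 := by simpa using congrArg TrivSqZeroExt.snd h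
  have hp : p.eval 1 = 0 := by simpa [hq] using congrArg TrivSqZeroExt.fst h
  rw [← C_1]
  exact ⟨dvd_iff_isRoot.2 hp, dvd_iff_isRoot.2 hq⟩

end DualNumbers

section DihedralDecomposition

/-- The homomorphism `r ↦ 1`, `s ↦ 1 + ε` from the dihedral group of order `2n` to the dual numbers
in characteristic two. -/
def dihedralToDualNumber (R : Type*) [CommRing R] [CharP R 2] (n : ℕ) [NeZero n] :
    DihedralGroup n →* R[ε] :=
  dihedralLift 1 (1 + ε) (one_pow n) one_add_eps_mul_self (by rw [one_mul, mul_one])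

/-- The two-dimensional representation of the dihedral group of order `2n` whose rotation has trace
`c`. It exists when the characteristic polynomial of that rotation divides `X ^ n - 1`. -/
def dihedralToMatrix {R : Type*} [CommRing R] {n : ℕ} [NeZero n] (c : R)
    (h : (rotationMatrix c).charpoly ∣ X ^ n - 1) :
    DihedralGroup n →* Matrix (Fin 2) (Fin 2) R :=
  dihedralLift (rotationMatrix c) (swapMatrix R) (rotationMatrix_pow_eq_one h)
    swapMatrix_mul_self (rotationMatrix_mul_swapMatrix_mul_rotationMatrix c)

variable {F ι : Type*} [Field F] [Fintype ι] {n : ℕ} {c : ι → F}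

theorem charpoly_rotationMatrix_dvd
    (hc : X ^ n - 1 = (X - 1) * ∏ i, (rotationMatrix (c i)).charpoly) (i : ι) :
    (rotationMatrix (c i)).charpoly ∣ X ^ n - 1 :=
  hc ▸ (Finset.dvd_prod_of_mem _ (Finset.mem_univ i)).mul_left _

theorem eq_one_add_two_mul_card (hc : X ^ n - 1 = (X - 1) * ∏ i, (X ^ 2 - C (c i) * X + 1)) :
    n = 1 + 2 * Fintype.card ι := by
  simp_rw [← charpoly_rotationMatrix] at hc
  have monic_charpoly (i : ι) (_ : i ∈ Finset.univ) : (rotationMatrix (c i)).charpoly.Monic :=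
    Matrix.charpoly_monic _
  have natDegree_eq := congrArg natDegree hc
  rw [← C_1, (monic_X_sub_C 1).natDegree_mul (monic_prod_of_monic _ _ monic_charpoly),
    natDegree_prod_of_monic _ _ monic_charpoly, natDegree_X_pow_sub_C,
    natDegree_X_sub_C] at natDegree_eq
  simpa [Matrix.charpoly_natDegree_eq_dim, mul_comm] using natDegree_eq

variable (F ι) in
theorem finrank_dualNumber_prod_pi_matrix :
    Module.finrank F (F[ε] × (ι → Matrix (Fin 2) (Fin 2) F)) = 2 + 4 * Fintype.card ι := by
  have : Module.Finite F F[ε] := inferInstanceAs (Module.Finite F (F × F))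
  have finrank_dualNumber : Module.finrank F F[ε] = 2 :=
    (Module.finrank_prod (R := F) (M := F) (M' := F)).trans (by simp)
  simp [finrank_dualNumber, Module.finrank_matrix, mul_comm, Module.finrank_pi_fintype]

variable [CharP F 2]

/-- The algebra homomorphism out of the group algebra of the dihedral group with components
`dihedralToDualNumber` and `dihedralToMatrix (c i)`, where the `c i` are the traces of the rotation
in its two-dimensional representations. -/
noncomputable def dihedralDecomposition [NeZero n]
    (hc : X ^ n - 1 = (X - 1) * ∏ i, (rotationMatrix (c i)).charpoly) :
    MonoidAlgebra F (DihedralGroup n) →ₐ[F] F[ε] × (ι → Matrix (Fin 2) (Fin 2) F) :=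
  (MonoidAlgebra.lift F _ _ (dihedralToDualNumber F n)).prod
    (AlgHom.pi fun i =>
      MonoidAlgebra.lift F _ _ (dihedralToMatrix (c i) (charpoly_rotationMatrix_dvd hc i)))

theorem dihedralDecomposition_injective [NeZero n] (hn : (n : F) ≠ 0)
    (hc : X ^ n - 1 = (X - 1) * ∏ i, (rotationMatrix (c i)).charpoly) :
    Function.Injective (dihedralDecomposition hc) := by
  have separable : (X ^ n - 1 : F[X]).Separable := X_pow_sub_one_separable_iff.2 hn
  have sq_ne_four (i : ι) : c i ^ 2 ≠ 4 := sq_ne_four_of_separable_charpoly_rotationMatrix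
    (separable.of_dvd (charpoly_rotationMatrix_dvd hc i))
  refine (injective_iff_map_eq_zero _).2 fun x hx => ?_
  have X_sub_one_dvd := X_sub_one_dvd_of_aeval_add_one_add_eps_mul_aeval_eq_zero
    ((lift_dihedralLift _ _ _ x).symm.trans (congrArg Prod.fst hx))
  have charpoly_dvd (i : ι) := charpoly_dvd_of_aeval_add_swapMatrix_mul_aeval_eq_zero
    (sq_ne_four i) ((lift_dihedralLift _ _ _ x).symm.trans (congrFun (congrArg Prod.snd hx) i))
  rw [hc] at separable
  have rotations_eq_zero : (fun i => x.coeff (.r i)) = 0 :=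
    eq_zero_of_X_pow_sub_one_dvd_zmodPolynomial
      (hc ▸ mul_prod_dvd_of_separable separable X_sub_one_dvd.1 fun i => (charpoly_dvd i).1)
  have reflections_eq_zero : (fun i => x.coeff (.sr i)) = 0 :=
    eq_zero_of_X_pow_sub_one_dvd_zmodPolynomial
      (hc ▸ mul_prod_dvd_of_separable separable X_sub_one_dvd.2 fun i => (charpoly_dvd i).2)
  ext (i | i)
  exacts [congrFun rotations_eq_zero i, congrFun reflections_eq_zero i]

theorem nonempty_monoidAlgebra_dihedralGroup_algEquiv
    (hc : X ^ n - 1 = (X - 1) * ∏ i, (X ^ 2 - C (c i) * X + 1)) :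
    Nonempty (MonoidAlgebra F (DihedralGroup n) ≃ₐ[F]
      F[ε] × (ι → Matrix (Fin 2) (Fin 2) F)) := by
  have card_eq : n = 1 + 2 * Fintype.card ι := eq_one_add_two_mul_card hc
  simp_rw [← charpoly_rotationMatrix] at hc
  have : NeZero n := ⟨by omega⟩
  have : Module.Finite F F[ε] := inferInstanceAs (Module.Finite F (F × F))
  have cast_ne_zero : (n : F) ≠ 0 := by simp [card_eq, CharTwo.two_eq_zero]
  have finrank_eq : Module.finrank F (MonoidAlgebra F (DihedralGroup n)) =
      Module.finrank F (F[ε] × (ι → Matrix (Fin 2) (Fin 2) F)) := by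
    rw [finrank_monoidAlgebra, DihedralGroup.nat_card, finrank_dualNumber_prod_pi_matrix]
    omega
  have injective := dihedralDecomposition_injective cast_ne_zero hc
  have surjective : Function.Surjective (dihedralDecomposition hc) :=
    (LinearMap.injective_iff_surjective_of_finrank_eq_finrank
      (f := (dihedralDecomposition hc).toLinearMap) finrank_eq).1 injective
  exact ⟨AlgEquiv.ofBijective (dihedralDecomposition hc) ⟨injective, surjective⟩⟩

end DihedralDecomposition

section Units

variable {F : Type*} [Field F] [CharP F 2]

theorem nonempty_units_monoidAlgebra_prod_dihedralGroup_mulEquiv {A ι : Type*} [CommGroup A]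
    [Finite A] [HasEnoughRootsOfUnity F (Monoid.exponent A)] [Fintype ι] {n : ℕ} {c : ι → F}
    (hc : X ^ n - 1 = (X - 1) * ∏ i, (X ^ 2 - C (c i) * X + 1)) :
    Nonempty ((MonoidAlgebra F (A × DihedralGroup n))ˣ ≃*
      Multiplicative (A → F) × (A → Fˣ) × (A × ι → GL (Fin 2) F)) := by
  have : NeZero n := ⟨by rw [eq_one_add_two_mul_card hc]; omega⟩
  obtain ⟨characters⟩ := nonempty_monoidAlgebra_prod_algEquiv_pi F A (DihedralGroup n)
  obtain ⟨dihedral⟩ := nonempty_monoidAlgebra_dihedralGroup_algEquiv hc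
  let unitsFactor : (MonoidAlgebra F (DihedralGroup n))ˣ ≃*
      (Multiplicative F × Fˣ) × (ι → GL (Fin 2) F) :=
    (Units.mapEquiv dihedral.toMulEquiv).trans <| MulEquiv.prodUnits.trans <|
      (unitsTrivSqZeroExtEquiv F F).prodCongr MulEquiv.piUnits
  exact ⟨(Units.mapEquiv characters.toMulEquiv).trans <| MulEquiv.piUnits.trans <|
    (MulEquiv.piCongrRight fun _ => unitsFactor).trans <| (regroupPiProd _ _ _ _ _).trans <|
      (MulEquiv.funMultiplicative A F).symm.prodCongr (MulEquiv.refl _)⟩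

theorem X_pow_five_sub_one_eq {ω : F} (hω : IsPrimitiveRoot ω 3) :
    (X ^ 5 - 1 : F[X]) = (X - 1) * ∏ i, (X ^ 2 - C (![ω, ω ^ 2] i) * X + 1) := by
  have two_eq_zero : (2 : F[X]) = 0 := CharTwo.two_eq_zero
  have cube_eq_one : C ω ^ 3 = 1 := by rw [← C_pow, hω.pow_eq_one, C_1]
  have sum_eq_zero : 1 + C ω + C ω ^ 2 = 0 := by
    have := hω.geom_sum_eq_zero (by norm_num)
    rw [← map_pow, ← C_1, ← C_add, ← C_add, ← C_0, ← this]
    simp [Finset.sum_range_succ]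
  simp only [Fin.prod_univ_two, Matrix.cons_val_zero, Matrix.cons_val_one, C_pow]
  linear_combination (X - 1) *
    ((X ^ 3 + X) * sum_eq_zero - X ^ 2 * cube_eq_one - X ^ 2 * two_eq_zero)

theorem stmt_8_general {A : Type*} [Finite F] [CommGroup A] [Finite A] {k m n d : ℕ}
    (hF : Nat.card F = 2 ^ k) (hm : Nat.card A = m) (hA : Monoid.exponent A ∣ 2 ^ k - 1)
    {c : Fin d → F} (hc : X ^ n - 1 = (X - 1) * ∏ i, (X ^ 2 - C (c i) * X + 1)) :
    ∃ φ : ((Fin m → Multiplicative (ZMod (2 ^ k - 1))) × (Fin (m * d) → GL (Fin 2) F)) →*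
          MulAut (Fin (m * k) → Multiplicative (ZMod 2)),
      Nonempty ((MonoidAlgebra F (A × DihedralGroup n))ˣ ≃*
        (Fin (m * k) → Multiplicative (ZMod 2)) ⋊[φ]
          ((Fin m → Multiplicative (ZMod (2 ^ k - 1))) × (Fin (m * d) → GL (Fin 2) F))) := by
  have : HasEnoughRootsOfUnity F (Monoid.exponent A) :=
    hasEnoughRootsOfUnity_of_dvd_card_sub_one (hF.symm ▸ hA)
  obtain ⟨direct⟩ := nonempty_units_monoidAlgebra_prod_dihedralGroup_mulEquiv (A := A) hc
  let := ZMod.algebra F 2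
  obtain ⟨additive⟩ := nonempty_mulEquiv_pi_zmod_of_card_eq_pow (p := 2) (V := A → F) (d := m * k)
    (by rw [Nat.card_fun, hF, hm, ← pow_mul, mul_comm])
  have card_units : Nat.card Fˣ = Nat.card (Multiplicative (ZMod (2 ^ k - 1))) := by
    rw [Nat.card_units, hF, Nat.card_congr Multiplicative.toAdd, Nat.card_zmod]
  let enumA : A ≃ Fin m := Finite.equivFinOfCardEq hm
  let enumProd : A × Fin d ≃ Fin (m * d) := (enumA.prodCongr (.refl _)).trans finProdFinEquiv
  exact ⟨1, ⟨direct.trans <| (additive.prodCongr <|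
    (MulEquiv.arrowCongr enumA (mulEquivOfCyclicCardEq card_units)).prodCongr <|
      MulEquiv.arrowCongr enumProd (.refl _)).trans SemidirectProduct.mulEquivProd.symm⟩⟩

end Units

/-- For `F` a finite field with `2^k` elements, `2^k ≡ 1, 4 (mod 15)`, and
`G = C₃ × D₁₀`, the unit group of `FG` is isomorphic to
`C₂^(3k) ⋊ (C_{2^k-1}³ × GL(2,F)⁶)`. -/
theorem stmt_8 (F : Type) [Field F] [Fintype F] (k : ℕ) (hk : 0 < k)
    (hchar : CharP F 2) (hcard : Fintype.card F = 2 ^ k)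
    (hq : 2 ^ k % 15 = 1 ∨ 2 ^ k % 15 = 4) :
    let G := Multiplicative (ZMod 3) × DihedralGroup 5
    ∃ φ : ((Fin 3 → Multiplicative (ZMod (2 ^ k - 1)))
            × (Fin 6 → GL (Fin 2) F)) →*
          MulAut (Fin (3 * k) → Multiplicative (ZMod 2)),
      Nonempty ((MonoidAlgebra F G)ˣ ≃*
        (Fin (3 * k) → Multiplicative (ZMod 2)) ⋊[φ]
          ((Fin 3 → Multiplicative (ZMod (2 ^ k - 1))) × (Fin 6 → GL (Fin 2) F))) := by
  have card_eq : Nat.card F = 2 ^ k := Nat.card_eq_fintype_card.trans hcard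
  have three_dvd : 3 ∣ 2 ^ k - 1 := by omega
  obtain ⟨ω, hω⟩ := (hasEnoughRootsOfUnity_of_dvd_card_sub_one (card_eq ▸ three_dvd)).prim
  have exponent_eq : Monoid.exponent (Multiplicative (ZMod 3)) = 3 := by
    rw [IsCyclic.exponent_eq_card, Nat.card_congr Multiplicative.toAdd, Nat.card_zmod]
  exact stmt_8_general card_eq (by simp) (exponent_eq.symm ▸ three_dvd) (X_pow_five_sub_one_eq hω)
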